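/- Let $t > 0$, $x \in \mathbb{R}^d$, $b \in \mathbb{R}^d$, $\sigma_0 \in \mathbb{M}^d$ invertible, and $\phi : \mathbb{R}^d \to \mathbb{R}$ bounded continuous. Let $W_t \sim \mathcal{N}(0, t I_d)$. Then $D^2_x\, \mathbb{E}\big[\phi(x + bt + \sigma_0 W_t)\big] = \mathbb{E}\Big[\phi(x + bt + \sigma_0 W_t)\,(\sigma_0^\top)^{-1}\,\frac{W_t W_t^\top - t I_d}{t^2}\,\sigma_0^{-1}\Big]$, where $D^2_x$ denotes the Hessian with respect to $x$. -/

import Mathlib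

open MeasureTheory ProbabilityTheory

namespace GaussIBP

/-- The linear functional `v ↦ ∑ w a * v a`. -/
noncomputable def lin {d : ℕ} (w : Fin d → ℝ) : (Fin d → ℝ) →L[ℝ] ℝ :=
  ∑ a, w a • ContinuousLinearMap.proj (R := ℝ) (φ := fun _ : Fin d => ℝ) a

lemma lin_apply {d : ℕ} (w v : Fin d → ℝ) : lin w v = ∑ a, w a * v a := by
  simp [lin]

lemma lin_comm {d : ℕ} (w v : Fin d → ℝ) : lin w v = lin v w := by
  simp [lin_apply, mul_comm]

lemma continuous_lin {d : ℕ} : Continuous (lin (d := d)) := by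
  unfold lin
  fun_prop

/-- Sum of absolute values. -/
noncomputable def sab {d : ℕ} (w : Fin d → ℝ) : ℝ := ∑ a, |w a|

lemma sab_nonneg {d : ℕ} (w : Fin d → ℝ) : 0 ≤ sab w :=
  Finset.sum_nonneg fun _ _ => abs_nonneg _

lemma continuous_sab {d : ℕ} : Continuous (sab (d := d)) := by
  unfold sab
  fun_prop

lemma abs_lin_le {d : ℕ} (w v : Fin d → ℝ) : |lin w v| ≤ ‖v‖ * sab w := by
  rw [lin_apply, sab, Finset.mul_sum]
  refine (Finset.abs_sum_le_sum_abs _ _).trans (Finset.sum_le_sum fun a _ => ?_)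
  rw [abs_mul, mul_comm]
  gcongr
  exact norm_le_pi_norm v a

lemma norm_lin_le {d : ℕ} (w : Fin d → ℝ) : ‖lin w‖ ≤ sab w := by
  refine ContinuousLinearMap.opNorm_le_bound _ (sab_nonneg w) fun v => ?_
  rw [Real.norm_eq_abs, mul_comm]
  exact abs_lin_le w v

/-- Functions integrable against all exponentials. -/
def Good {d : ℕ} (ν : Measure (Fin d → ℝ)) (f : (Fin d → ℝ) → ℝ) : Prop :=
  AEStronglyMeasurable f ν ∧ ∀ R : ℝ, Integrable (fun w => f w * Real.exp (R * sab w)) ν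

lemma Good.mul_lin {d : ℕ} {ν : Measure (Fin d → ℝ)} {f : (Fin d → ℝ) → ℝ}
    (hf : Good ν f) (e : Fin d → ℝ) : Good ν (fun w => f w * lin w e) := by
  have hm : AEStronglyMeasurable (fun w => f w * lin w e) ν :=
    hf.1.mul (continuous_lin.clm_apply continuous_const).aestronglyMeasurable
  refine ⟨hm, fun R => ?_⟩
  have h := (hf.2 (R + 1)).norm.const_mul ‖e‖
  refine h.mono' (hm.mul (by have := continuous_sab (d := d); fun_prop)) ?_
  refine Filter.Eventually.of_forall fun w => ?_
  have h1 := abs_lin_le w e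
  have h2 : sab w ≤ Real.exp (sab w) := by linarith [Real.add_one_le_exp (sab w)]
  simp only [norm_mul, Real.norm_eq_abs, Real.abs_exp]
  have h3 : Real.exp ((R + 1) * sab w) = Real.exp (sab w) * Real.exp (R * sab w) := by
    rw [← Real.exp_add]; ring_nf
  rw [h3]
  calc |f w| * |lin w e| * Real.exp (R * sab w)
      ≤ |f w| * (‖e‖ * Real.exp (sab w)) * Real.exp (R * sab w) := by
        gcongr
        exact h1.trans (by gcongr)
    _ = _ := by ring

/-- Exponential transform. -/
noncomputable def tr {d : ℕ} (ν : Measure (Fin d → ℝ)) (f : (Fin d → ℝ) → ℝ)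
    (v : Fin d → ℝ) : ℝ := ∫ w, f w * Real.exp (lin w v) ∂ν

lemma Good.integrable {d : ℕ} {ν : Measure (Fin d → ℝ)} {f : (Fin d → ℝ) → ℝ}
    (hf : Good ν f) (v : Fin d → ℝ) : Integrable (fun w => f w * Real.exp (lin w v)) ν := by
  refine (hf.2 ‖v‖).norm.mono' (hf.1.mul ?_) (Filter.Eventually.of_forall fun w => ?_)
  · exact (Real.continuous_exp.comp
      (continuous_lin.clm_apply continuous_const)).aestronglyMeasurable
  · simp only [norm_mul, Real.norm_eq_abs, Real.abs_exp]
    gcongr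
    exact (le_abs_self _).trans (abs_lin_le w v)

lemma Good.hasFDerivAt {d : ℕ} {ν : Measure (Fin d → ℝ)} {f : (Fin d → ℝ) → ℝ}
    (hf : Good ν f) (v : Fin d → ℝ) :
    HasFDerivAt (tr ν f) (∫ w, (f w * Real.exp (lin w v)) • lin w ∂ν) v := by
  have hme : ∀ x : Fin d → ℝ, AEStronglyMeasurable (fun w => f w * Real.exp (lin w x)) ν :=
    fun x => (hf.integrable x).aestronglyMeasurable
  refine hasFDerivAt_integral_of_dominated_of_fderiv_le (s := Metric.ball v 1)
    (bound := fun w => ‖f w * Real.exp ((‖v‖ + 2) * sab w)‖)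
    (F' := fun v w => (f w * Real.exp (lin w v)) • lin w)
    (Metric.ball_mem_nhds v one_pos)
    (Filter.Eventually.of_forall hme) (hf.integrable v)
    ((hme v).smul continuous_lin.aestronglyMeasurable)
    (Filter.Eventually.of_forall fun w x hx => ?_) (hf.2 _).norm
    (Filter.Eventually.of_forall fun w x hx => ?_)
  · have hxn : ‖x‖ ≤ ‖v‖ + 1 := by
      have h1 : ‖x - v‖ < 1 := by simpa [dist_eq_norm] using hx
      have h2 := norm_add_le (x - v) v
      simp only [sub_add_cancel] at h2
      linarith
    have h2 : sab w ≤ Real.exp (sab w) := by linarith [Real.add_one_le_exp (sab w)]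
    have h3 : Real.exp ((‖v‖ + 2) * sab w)
        = Real.exp ((‖v‖ + 1) * sab w) * Real.exp (sab w) := by
      rw [← Real.exp_add]; ring_nf
    have h4 : lin w x ≤ (‖v‖ + 1) * sab w :=
      (le_abs_self _).trans ((abs_lin_le w x).trans
        (mul_le_mul_of_nonneg_right hxn (sab_nonneg w)))
    rw [norm_smul, h3, ← mul_assoc, norm_mul _ (Real.exp (sab w)), norm_mul, norm_mul]
    simp only [Real.norm_eq_abs, Real.abs_exp]
    gcongr
    exact (norm_lin_le w).trans h2
  · have h := ((lin w).hasFDerivAt (x := x)).exp.const_mul (f w)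
    simpa [smul_smul] using h

lemma Good.fderiv_apply {d : ℕ} {ν : Measure (Fin d → ℝ)} {f : (Fin d → ℝ) → ℝ}
    (hf : Good ν f) (v e : Fin d → ℝ) :
    fderiv ℝ (tr ν f) v e = tr ν (fun w => f w * lin w e) v := by
  rw [(hf.hasFDerivAt v).fderiv, ContinuousLinearMap.integral_apply]
  · refine integral_congr_ae (Filter.Eventually.of_forall fun w => ?_)
    simp only [_root_.smul_apply, smul_eq_mul]
    ring
  · have h := (hf.2 (‖v‖ + 1)).norm
    refine h.mono' ((hf.integrable v).aestronglyMeasurable.smul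
      continuous_lin.aestronglyMeasurable) (Filter.Eventually.of_forall fun w => ?_)
    have h2 : sab w ≤ Real.exp (sab w) := by linarith [Real.add_one_le_exp (sab w)]
    have h3 : Real.exp ((‖v‖ + 1) * sab w)
        = Real.exp (‖v‖ * sab w) * Real.exp (sab w) := by
      rw [← Real.exp_add]; ring_nf
    have h4 : lin w v ≤ ‖v‖ * sab w := (le_abs_self _).trans (abs_lin_le w v)
    rw [norm_smul, h3, ← mul_assoc, norm_mul _ (Real.exp (sab w)), norm_mul, norm_mul]
    simp only [Real.norm_eq_abs, Real.abs_exp]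
    gcongr
    exact (norm_lin_le w).trans h2

lemma Good.differentiable {d : ℕ} {ν : Measure (Fin d → ℝ)} {f : (Fin d → ℝ) → ℝ}
    (hf : Good ν f) : Differentiable ℝ (tr ν f) :=
  fun v => (hf.hasFDerivAt v).differentiableAt

lemma Good.contDiff {d : ℕ} {ν : Measure (Fin d → ℝ)} (n : ℕ) :
    ∀ {f : (Fin d → ℝ) → ℝ}, Good ν f → ContDiff ℝ n (tr ν f) := by
  induction n with
  | zero =>
    intro f hf
    exact contDiff_zero.2 hf.differentiable.continuous
  | succ n ih =>
    intro f hf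
    push_cast
    rw [contDiff_succ_iff_fderiv_apply]
    refine ⟨hf.differentiable, fun h => absurd h (by simp), fun e => ?_⟩
    simp only [hf.fderiv_apply]
    exact ih (hf.mul_lin e)

/-- The Gaussian-weighted transform. -/
noncomputable def gt {d : ℕ} (t : ℝ) (ν : Measure (Fin d → ℝ)) (f : (Fin d → ℝ) → ℝ)
    (v : Fin d → ℝ) : ℝ := Real.exp (-(t / 2) * ∑ a, v a ^ 2) * tr ν f v

lemma gt_contDiff {d : ℕ} (t : ℝ) {ν : Measure (Fin d → ℝ)} {f : (Fin d → ℝ) → ℝ}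
    (hf : Good ν f) : ContDiff ℝ 2 (gt t ν f) := by
  have := hf.contDiff 2
  unfold gt
  refine ContDiff.mul ?_ (by exact_mod_cast this)
  fun_prop

lemma hasFDerivAt_weight {d : ℕ} (t : ℝ) (v : Fin d → ℝ) :
    HasFDerivAt (fun v : Fin d → ℝ => Real.exp (-(t / 2) * ∑ a, v a ^ 2))
      (Real.exp (-(t / 2) * ∑ a, v a ^ 2) • (-t) • lin v) v := by
  have h : HasFDerivAt (fun v : Fin d → ℝ => -(t / 2) * ∑ a, v a ^ 2) ((-t) • lin v) v := by
    have h1 : HasFDerivAt (fun v : Fin d → ℝ => ∑ a, v a ^ 2)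
        (∑ a, (2 * v a) • ContinuousLinearMap.proj (R := ℝ) (φ := fun _ : Fin d => ℝ) a) v := by
      refine HasFDerivAt.fun_sum fun a _ => ?_
      have := (hasFDerivAt_apply (𝕜 := ℝ) a v).pow 2
      simpa using this
    refine (h1.const_mul (-(t / 2))).congr_fderiv ?_
    ext e
    simp only [lin_apply, _root_.smul_apply, _root_.sum_apply,
      ContinuousLinearMap.proj_apply, smul_eq_mul, Finset.mul_sum]
    refine Finset.sum_congr rfl fun a _ => ?_
    ring
  exact h.exp

lemma gt_fderiv {d : ℕ} (t : ℝ) {ν : Measure (Fin d → ℝ)} {f : (Fin d → ℝ) → ℝ}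
    (hf : Good ν f) (v e : Fin d → ℝ) :
    fderiv ℝ (gt t ν f) v e = gt t ν (fun w => f w * lin w e) v - t * lin e v * gt t ν f v := by
  have h := ((hasFDerivAt_weight t v).mul (hf.differentiable v).hasFDerivAt).fderiv
  have h' : fderiv ℝ (gt t ν f) v = _ := h
  rw [h']
  simp only [_root_.add_apply, _root_.smul_apply, smul_eq_mul,
    hf.fderiv_apply, gt, lin_comm v e]
  ring

lemma gt_fderiv2 {d : ℕ} (t : ℝ) {ν : Measure (Fin d → ℝ)} {f : (Fin d → ℝ) → ℝ}
    (hf : Good ν f) (p q : Fin d → ℝ) :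
    fderiv ℝ (fun v => fderiv ℝ (gt t ν f) v p) 0 q
      = ∫ w, f w * (lin w p * lin w q - t * lin p q) ∂ν := by
  have hd : ∀ {f}, Good ν f → Differentiable ℝ (gt t ν f) :=
    fun hf => (gt_contDiff t hf).differentiable (by norm_num)
  simp only [gt_fderiv t hf]
  have h1 := (hd (hf.mul_lin p) 0).hasFDerivAt
  have h2 := (((lin p).hasFDerivAt (x := 0)).const_mul t).mul (hd hf 0).hasFDerivAt
  have h3 := (h1.sub h2).fderiv
  have h4 : fderiv ℝ (fun v => gt t ν (fun w => f w * lin w p) v - t * lin p v * gt t ν f v) 0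
    = _ := h3
  rw [h4]
  have i1 := (hf.mul_lin p).mul_lin q |>.integrable 0
  have i2 := hf.integrable 0
  simp only [map_zero, Real.exp_zero, mul_one] at i1 i2
  simp only [_root_.sub_apply, _root_.add_apply,
    _root_.smul_apply, smul_eq_mul, gt_fderiv t (hf.mul_lin p), map_zero,
    mul_zero, zero_mul, sub_zero, zero_add, gt, tr, Real.exp_zero, mul_one, Pi.zero_apply,
    ne_eq, OfNat.ofNat_ne_zero, not_false_eq_true, zero_pow, Finset.sum_const_zero, one_mul]
  rw [← integral_mul_const, ← integral_sub i1 (i2.mul_const _)]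
  refine integral_congr_ae (Filter.Eventually.of_forall fun w => ?_)
  simp only
  ring

lemma shift_one (v : NNReal) (hv : v ≠ 0) (u : ℝ) :
    gaussianReal u v = (gaussianReal 0 v).withDensity
      (fun x => ENNReal.ofReal (Real.exp (u * x / v - u ^ 2 / (2 * v)))) := by
  have hv' : (v : ℝ) ≠ 0 := by exact_mod_cast hv
  rw [gaussianReal_of_var_ne_zero _ hv, gaussianReal_of_var_ne_zero _ hv,
    ← withDensity_mul _ (measurable_gaussianPDF 0 v) (by fun_prop)]
  congr 1
  ext x
  simp only [gaussianPDF, Pi.mul_apply, gaussianPDFReal]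
  rw [← ENNReal.ofReal_mul (by positivity), mul_assoc (√(2 * Real.pi * v))⁻¹, ← Real.exp_add]
  congr 3
  field_simp
  ring

lemma shift_pi (d : ℕ) (v : NNReal) (hv : v ≠ 0) (u : Fin d → ℝ) :
    Measure.pi (fun i => gaussianReal (u i) v) =
      (Measure.pi fun _ : Fin d => gaussianReal 0 v).withDensity
      (fun x => ∏ i, ENNReal.ofReal (Real.exp (u i * x i / v - u i ^ 2 / (2 * v)))) := by
  refine Measure.pi_eq fun s hs => ?_
  rw [withDensity_apply _ (MeasurableSet.univ_pi hs), ← lintegral_indicator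
    (MeasurableSet.univ_pi hs)]
  have hm : ∀ i, Measurable ((s i).indicator
      (fun x => ENNReal.ofReal (Real.exp (u i * x / v - u i ^ 2 / (2 * v))))) :=
    fun i => Measurable.indicator (by fun_prop) (hs i)
  have key := lintegral_prod_eq_prod_lintegral_of_indepFun Finset.univ _
    (iIndepFun_pi (μ := fun _ : Fin d => gaussianReal 0 v) fun i => (hm i).aemeasurable)
    (fun i => (hm i).comp (measurable_pi_apply i))
  have e1 : ∀ ω : Fin d → ℝ, (Set.univ.pi s).indicator
      (fun x => ∏ i, ENNReal.ofReal (Real.exp (u i * x i / v - u i ^ 2 / (2 * v)))) ω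
      = ∏ i, (s i).indicator
        (fun x => ENNReal.ofReal (Real.exp (u i * x / v - u i ^ 2 / (2 * v)))) (ω i) := by
    intro ω
    by_cases h : ω ∈ Set.univ.pi s
    · rw [Set.indicator_of_mem h]
      refine Finset.prod_congr rfl fun i _ => ?_
      rw [Set.indicator_of_mem (h i (Set.mem_univ i))]
    · rw [Set.indicator_of_notMem h]
      simp only [Set.mem_univ_pi, not_forall] at h
      obtain ⟨i, hi⟩ := h
      exact (Finset.prod_eq_zero (Finset.mem_univ i) (Set.indicator_of_notMem hi _)).symm
  rw [lintegral_congr e1, key]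
  refine Finset.prod_congr rfl fun i _ => ?_
  rw [shift_one v hv (u i), withDensity_apply _ (hs i), ← lintegral_indicator (hs i)]
  exact ((measurePreserving_eval (fun _ : Fin d => gaussianReal 0 v) i).lintegral_comp (hm i))

lemma shift_integral (d : ℕ) (t : ℝ) (ht : 0 < t) (v : NNReal) (hvt : (v : ℝ) = t) (u : Fin d → ℝ) (h : (Fin d → ℝ) → ℝ)
    (hc : Continuous h) :
    ∫ w, h (u + w) ∂(Measure.pi fun _ : Fin d => gaussianReal 0 v) =
      gt t (Measure.pi fun _ : Fin d => gaussianReal 0 v) h (t⁻¹ • u) := by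
  have hv : v ≠ 0 := by
    rintro rfl
    simp at hvt
    exact ht.ne hvt
  have hmap : (Measure.pi fun _ : Fin d => gaussianReal 0 v).map (fun w => u + w) =
      Measure.pi (fun i => gaussianReal (u i) v) := by
    have := Measure.pi_map_pi (μ := fun _ : Fin d => gaussianReal 0 v)
      (f := fun i x => u i + x) (hμ := fun i => by
        rw [gaussianReal_map_const_add]; infer_instance)
      (fun i => by fun_prop)
    simp only [gaussianReal_map_const_add, zero_add] at this
    exact this
  rw [← integral_map (φ := fun w => u + w) (f := h) (by fun_prop) hc.aestronglyMeasurable, hmap,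
    shift_pi d _ hv u, integral_withDensity_eq_integral_toReal_smul (by fun_prop)
    (Filter.Eventually.of_forall fun x => ENNReal.prod_lt_top fun i _ => ENNReal.ofReal_lt_top)]
  rw [gt, tr, ← integral_const_mul]
  refine integral_congr_ae (Filter.Eventually.of_forall fun w => ?_)
  simp only [ENNReal.toReal_prod, ENNReal.toReal_ofReal (Real.exp_pos _).le, smul_eq_mul]
  rw [← Real.exp_sum, mul_left_comm, ← Real.exp_add, mul_comm]
  congr 2
  rw [lin_apply, Finset.mul_sum, ← Finset.sum_add_distrib]
  refine Finset.sum_congr rfl fun i _ => ?_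
  simp only [Pi.smul_apply, smul_eq_mul, hvt]
  field_simp
  ring

lemma good_of_bounded (d : ℕ) (v : NNReal) (h : (Fin d → ℝ) → ℝ)
    (hc : Continuous h) (hb : ∃ M, ∀ y, |h y| ≤ M) :
    Good (Measure.pi fun _ : Fin d => gaussianReal 0 v) h := by
  obtain ⟨M, hM⟩ := hb
  refine ⟨hc.aestronglyMeasurable, fun R => ?_⟩
  refine Integrable.bdd_mul (c := M) ?_ hc.aestronglyMeasurable
    (Filter.Eventually.of_forall fun w => hM w)
  have := Integrable.fintype_prod (ι := Fin d) (μ := fun _ => gaussianReal 0 v)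
    (f := fun _ x => Real.exp (R * |x|))
    (fun _ => integrable_exp_mul_abs (integrable_exp_mul_gaussianReal R)
      (integrable_exp_mul_gaussianReal (-R)))
  simpa only [← Real.exp_sum, ← Finset.mul_sum, sab] using this

end GaussIBP

open GaussIBP in
/-- Gaussian integration by parts for second derivatives: with `W_t ∼ N(0, t I_d)`,
the Hessian of `x ↦ E[φ(x + bt + σ₀ W_t)]` is
`E[φ(x + bt + σ₀ W_t) (σ₀ᵀ)⁻¹ ((W_t W_tᵀ - t I_d)/t²) σ₀⁻¹]`. -/
theorem gaussian_ibp_second_order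
    (d : ℕ) (t : ℝ) (ht : 0 < t) (x b : Fin d → ℝ)
    (σ0 : Matrix (Fin d) (Fin d) ℝ) (hσ : IsUnit σ0.det)
    (φ : (Fin d → ℝ) → ℝ) (hφc : Continuous φ) (hφb : ∃ M, ∀ y, |φ y| ≤ M)
    (ν : Measure (Fin d → ℝ))
    (hν : ν = Measure.pi fun _ => gaussianReal 0 ⟨t, ht.le⟩)
    (F : (Fin d → ℝ) → ℝ)
    (hF : ∀ z, F z = ∫ w, φ (fun i => z i + b i * t + σ0.mulVec w i) ∂ν) :
    ContDiff ℝ 2 F ∧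
    ∀ i j : Fin d,
      fderiv ℝ (fun y => fderiv ℝ F y (Pi.single j 1)) x (Pi.single i 1)
        = ∫ w, φ (fun i => x i + b i * t + σ0.mulVec w i) *
            ((σ0.transpose)⁻¹ *
              Matrix.of (fun a c => (w a * w c - (if a = c then t else 0)) / t ^ 2) *
              σ0⁻¹) i j ∂ν := by
  set h : (Fin d → ℝ) → ℝ := fun w => φ (fun i => x i + b i * t + σ0.mulVec w i) with hh
  have hmv : Continuous fun w : Fin d → ℝ => σ0.mulVec w :=
    continuous_const.matrix_mulVec continuous_id
  have hc : Continuous h := by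
    refine hφc.comp (continuous_pi fun i => ?_)
    exact continuous_const.add ((continuous_apply i).comp hmv)
  have hg : Good ν h := by
    rw [hν]
    exact good_of_bounded d _ h hc (hφb.imp fun M hM y => hM _)
  set B : (Fin d → ℝ) →L[ℝ] (Fin d → ℝ) :=
    t⁻¹ • LinearMap.toContinuousLinearMap (Matrix.mulVecLin σ0⁻¹) with hB
  have hBa : ∀ e, B e = t⁻¹ • (σ0⁻¹).mulVec e := fun e => by simp [hB]
  have hFG : F = fun z => gt t ν h (B (z - x)) := by
    ext z
    rw [hF, hBa, hν, ← shift_integral d t ht ⟨t, ht.le⟩ rfl _ h hc]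
    refine integral_congr_ae (Filter.Eventually.of_forall fun w => ?_)
    simp only [hh, Matrix.mulVec_add, Matrix.mulVec_mulVec, Matrix.mul_nonsing_inv _ hσ,
      Matrix.one_mulVec]
    congr 1
    ext i
    simp only [Pi.add_apply, Pi.sub_apply]
    ring
  have hGc := gt_contDiff t hg
  refine ⟨?_, fun i j => ?_⟩
  · rw [hFG]
    exact hGc.comp (B.contDiff.comp (contDiff_id.sub contDiff_const))
  · have hV : ∀ y, HasFDerivAt (fun z => B (z - x)) B y := fun y => by
      have := B.hasFDerivAt.comp y ((hasFDerivAt_id y).sub_const x)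
      simpa using this
    have h1 : ∀ y e, fderiv ℝ F y e = fderiv ℝ (gt t ν h) (B (y - x)) (B e) := by
      intro y e
      have hd := (hGc.differentiable (by norm_num) (B (y - x))).hasFDerivAt.comp y (hV y)
      rw [hFG]
      have hd' := hd.fderiv
      simp only [Function.comp_def] at hd'
      rw [hd']
      rfl
    simp only [h1]
    have hk : ContDiff ℝ 1 (fun v => fderiv ℝ (gt t ν h) v (B (Pi.single j 1))) :=
      (hGc.fderiv_right (m := 1) (by norm_num)).clm_apply contDiff_const
    have h2 := ((hk.differentiable (by norm_num) (B (x - x))).hasFDerivAt.comp x (hV x)).fderiv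
    simp only [Function.comp_def] at h2
    rw [h2, ContinuousLinearMap.comp_apply, sub_self, map_zero, gt_fderiv2 t hg]
    refine integral_congr_ae (Filter.Eventually.of_forall fun w => ?_)
    simp only
    congr 1
    rw [← Matrix.transpose_nonsing_inv]
    generalize σ0⁻¹ = A at *
    simp only [hBa, lin_apply, Matrix.mul_apply, Matrix.transpose_apply, Matrix.of_apply,
      Pi.smul_apply, smul_eq_mul, Matrix.mulVec_single_one, Matrix.col_apply]
    have e1 : ∀ c, (∑ a, A a i * ((w a * w c - if a = c then t else 0) / t ^ 2)) * A c j
        = (∑ a, w a * (t⁻¹ * A a i)) * (w c * (t⁻¹ * A c j))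
          - t * (t⁻¹ * A c j * (t⁻¹ * A c i)) := by
      intro c
      have : ∀ a, A a i * ((w a * w c - if a = c then t else 0) / t ^ 2)
          = (w a * (t⁻¹ * A a i)) * (w c * t⁻¹) - if a = c then A a i * t⁻¹ else 0 := by
        intro a
        split_ifs <;> field_simp
        ring
      simp only [this, Finset.sum_sub_distrib, ← Finset.sum_mul, Finset.sum_ite_eq',
        Finset.mem_univ, if_true]
      field_simp
    simp only [e1, Finset.sum_sub_distrib, ← Finset.mul_sum]
    ring
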